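/- Let A be a finite abelian group, N ≤ A a proper nontrivial subgroup, and D ⊆ A a divisible difference set relative to N with parameters (m,n,k,λ1,λ2), m, n > 1, satisfying the intersection condition and with k ≤ mn−k; put k_3 = k and k_4 = mn−k. Fix i ∈ {3,4} and suppose k_{7−i} = 2n and (m,n,k) ≠ (4,2,4). Let G = Dih(A) with reflecting element b, X2 = A\N, X3 = Db, X4 = (A\D)b. Then the Cayley graph Cay(G, X2 ∪ X_i) is a proper divisible design graph with parameters v' = 2mn, k' = n(m−1) + k_i, λ1' = n(m−1) + k_i(k_i − m)/((n−1)m), λ2' = n(m−2) + k_i^2/(mn), m' = 2m, n' = n, whose canonical partition is into the right cosets of N in G. -/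

import Mathlib

open Classical

/-- number of elements satisfying `p` -/
noncomputable def cnt {α : Type*} (p : α → Prop) : ℕ := Nat.card {x : α // p x}

lemma cnt_filter {α : Type*} [Fintype α] (p : α → Prop) :
    cnt p = (Finset.univ.filter p).card := by
  unfold cnt
  rw [Nat.card_eq_fintype_card, Fintype.card_subtype]

lemma cnt_iff {α : Type*} {p q : α → Prop} (h : ∀ a, p a ↔ q a) : cnt p = cnt q := by
  have : p = q := funext fun a => propext (h a)
  rw [this]

lemma cnt_equiv {α β : Type*} {p : α → Prop} {q : β → Prop} (e : α ≃ β)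
    (h : ∀ a, p a ↔ q (e a)) : cnt p = cnt q :=
  Nat.card_congr (e.subtypeEquiv h)

lemma cnt_and {α : Type*} [Fintype α] (p q : α → Prop) :
    cnt (fun a => p a ∧ q a) = ((Finset.univ.filter p).filter q).card := by
  rw [cnt_filter]
  congr 1
  ext x
  simp

lemma cnt_split {α : Type*} [Fintype α] (p q : α → Prop) :
    cnt p = cnt (fun a => p a ∧ q a) + cnt (fun a => p a ∧ ¬ q a) := by
  rw [cnt_and, cnt_and, cnt_filter]
  convert (Finset.card_filter_add_card_filter_not (s := Finset.univ.filter p) q).symm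

lemma cnt_double {α β : Type*} [Fintype α] [Fintype β] (p : α → Prop) (q : β → Prop)
    (r : α → β → Prop) :
    ∑ a ∈ Finset.univ.filter p, cnt (fun b => q b ∧ r a b)
      = ∑ b ∈ Finset.univ.filter q, cnt (fun a => p a ∧ r a b) := by
  simp only [cnt_and]
  exact Finset.sum_card_bipartiteAbove_eq_sum_card_bipartiteBelow r

lemma cnt_true {α : Type*} [Fintype α] : cnt (fun _ : α => True) = Fintype.card α := by
  simp [cnt_filter]

section A
variable {A : Type*} [CommGroup A] [Fintype A]

/-- `K = mμ`, in the form `K n = |A| μ` -/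
lemma count_K (N : Subgroup A) (E : A → Prop) (μ : ℕ)
    (hE : ∀ g : A, cnt (fun x => E x ∧ x * g⁻¹ ∈ N) = μ) :
    cnt E * cnt (fun x => x ∈ N) = Fintype.card A * μ := by
  have h := cnt_double (fun _ : A => True) E (fun g x => x * g⁻¹ ∈ N)
  simp only [hE] at h
  have h2 : ∀ x : A, cnt (fun g => True ∧ x * g⁻¹ ∈ N) = cnt (fun x => x ∈ N) := fun x =>
    cnt_equiv ((Equiv.inv A).trans (Equiv.mulLeft x)) (fun a => by simp)
  simp only [h2, Finset.sum_const, smul_eq_mul] at h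
  rw [← cnt_filter, ← cnt_filter, cnt_true] at h
  exact h.symm

lemma count_pairs (N : Subgroup A) (E : A → Prop) (μ : ℕ)
    (hE : ∀ g : A, cnt (fun x => E x ∧ x * g⁻¹ ∈ N) = μ) (g : A) :
    ∑ h ∈ Finset.univ.filter (fun x => x ∈ N), cnt (fun x => E x ∧ E (h * g * x))
      = cnt E * μ := by
  rw [cnt_double]
  have h2 : ∀ x : A, cnt (fun h => h ∈ N ∧ E (h * g * x)) = μ := fun x => by
    rw [← hE (g * x)]
    exact cnt_equiv (Equiv.mulRight (g * x)) (fun a => by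
      simp only [Equiv.coe_mulRight, mul_inv_cancel, mul_one, mul_assoc a, and_comm])
  simp only [h2, Finset.sum_const, smul_eq_mul]
  rw [← cnt_filter]

/-- The core of the argument inside `A`. -/
lemma core (N : Subgroup A) (E : A → Prop) (μ a c : ℕ) (htop : N ≠ ⊤)
    (hE : ∀ g : A, cnt (fun x => E x ∧ x * g⁻¹ ∈ N) = μ)
    (hd : ∀ g : A, g ≠ 1 → cnt (fun x => E x ∧ E (g * x)) = if g ∈ N then a else c) :
    cnt (fun x => x ∈ N) * c = cnt E * μ ∧
      cnt E + (cnt (fun x => x ∈ N) - 1) * a = cnt E * μ := by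
  constructor
  · obtain ⟨g, hg⟩ : ∃ g, g ∉ N := by
      by_contra! h
      exact htop ((Subgroup.eq_top_iff' N).2 h)
    rw [← count_pairs N E μ hE g]
    have : ∀ h ∈ Finset.univ.filter (fun x => x ∈ N), cnt (fun x => E x ∧ E (h * g * x)) = c := by
      intro h hh
      have hh : h ∈ N := by simpa using hh
      have h1 : h * g ∉ N := fun h' => hg ((Subgroup.mul_mem_cancel_left N hh).1 h')
      rw [hd _ (fun h' => h1 (by rw [h']; exact N.one_mem)), if_neg h1]
    rw [Finset.sum_congr rfl this, Finset.sum_const, smul_eq_mul, cnt_filter]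
  · rw [← count_pairs N E μ hE 1]
    have h1 : (1 : A) ∈ Finset.univ.filter (fun x => x ∈ N) := by simp [N.one_mem]
    rw [← Finset.add_sum_erase _ _ h1]
    have : ∀ h ∈ (Finset.univ.filter (fun x => x ∈ N)).erase 1,
        cnt (fun x => E x ∧ E (h * 1 * x)) = a := by
      intro h hh
      rw [Finset.mem_erase] at hh
      have hh2 : h ∈ N := by simpa using hh.2
      rw [mul_one, hd _ hh.1, if_pos hh2]
    rw [Finset.sum_congr rfl this, Finset.sum_const, smul_eq_mul, Finset.card_erase_of_mem h1,
      ← cnt_filter]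
    simp

lemma cnt_NN_in (N : Subgroup A) (s : A) (hs : s ∈ N) :
    cnt (fun x => x ∉ N ∧ x * s ∉ N) + cnt (fun x => x ∈ N) = Fintype.card A := by
  have h1 := cnt_split (fun _ : A => True) (fun x => x ∈ N)
  rw [cnt_true] at h1
  rw [h1, add_comm]
  congr 1
  · exact cnt_iff fun a => by simp
  · exact cnt_iff fun a => by simp [Subgroup.mul_mem_cancel_right N hs]

lemma cnt_NN_out (N : Subgroup A) (s : A) (hs : s ∉ N) :
    cnt (fun x => x ∉ N ∧ x * s ∉ N) + 2 * cnt (fun x => x ∈ N) = Fintype.card A := by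
  have h1 := cnt_split (fun _ : A => True) (fun x => x ∈ N)
  have h2 := cnt_split (fun x => x ∉ N) (fun x => x * s ∈ N)
  have h3 : cnt (fun x => x ∉ N ∧ x * s ∈ N) = cnt (fun x => x ∈ N) :=
    cnt_equiv (Equiv.mulRight s) fun a => by
      simp only [Equiv.coe_mulRight, and_iff_right_iff_imp]
      exact fun h h' => hs ((Subgroup.mul_mem_cancel_left N h').1 h)
  rw [cnt_true] at h1
  simp only [true_and] at h1
  omega

lemma cnt_NE (N : Subgroup A) (E : A → Prop) (μ : ℕ)
    (hE : ∀ g : A, cnt (fun x => E x ∧ x * g⁻¹ ∈ N) = μ) (s : A) :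
    cnt (fun x => x ∉ N ∧ E (x * s)) + μ = cnt E ∧
      cnt (fun x => E x ∧ x * s⁻¹ ∉ N) + μ = cnt E := by
  have h1 := cnt_split E (fun x => x * s⁻¹ ∈ N)
  rw [hE s] at h1
  refine ⟨?_, by omega⟩
  have : cnt (fun x => x ∉ N ∧ E (x * s)) = cnt (fun x => E x ∧ x * s⁻¹ ∉ N) :=
    cnt_equiv (Equiv.mulRight s) fun a => by simp [and_comm]
  omega

lemma compl_ic (N : Subgroup A) (E : A → Prop) (μ : ℕ)
    (hE : ∀ g : A, cnt (fun x => E x ∧ x * g⁻¹ ∈ N) = μ) (g : A) :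
    cnt (fun x => ¬ E x ∧ x * g⁻¹ ∈ N) = cnt (fun x => x ∈ N) - μ := by
  have h1 := cnt_split (fun x => x * g⁻¹ ∈ N) E
  have h2 : cnt (fun x => x * g⁻¹ ∈ N) = cnt (fun x => x ∈ N) :=
    cnt_equiv (Equiv.mulRight g⁻¹) fun a => by simp
  have h3 := hE g
  simp only [and_comm] at *
  omega

lemma cnt_compl (E : A → Prop) : cnt E + cnt (fun x => ¬ E x) = Fintype.card A := by
  have h1 := cnt_split (fun _ : A => True) E
  rw [cnt_true] at h1
  simp only [true_and] at h1
  exact h1.symm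

lemma compl_dd (E : A → Prop) (g : A) :
    cnt (fun x => ¬ E x ∧ ¬ E (g * x)) =
      Fintype.card A + cnt (fun x => E x ∧ E (g * x)) - 2 * cnt E := by
  have h1 := cnt_split (fun x => ¬ E x) (fun x => E (g * x))
  have h2 := cnt_split (fun x => E (g * x)) E
  have h3 : cnt (fun x => E (g * x)) = cnt E :=
    cnt_equiv (Equiv.mulLeft g) fun a => by simp
  have h4 := cnt_compl E
  have h5 : cnt (fun x => E (g * x) ∧ E x) = cnt (fun x => E x ∧ E (g * x)) :=
    cnt_iff fun x => and_comm
  have h6 : cnt (fun x => E (g * x) ∧ ¬ E x) = cnt (fun x => ¬ E x ∧ E (g * x)) :=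
    cnt_iff fun x => and_comm
  omega

end A

lemma cnt_G {A G : Type*} [CommGroup A] [Fintype A] [Group G] [Fintype G]
    (ι : A →* G) (hinj : Function.Injective ι) (b : G) (hbnot : b ∉ Set.range ι)
    (hdecomp : ∀ g : G, (∃ a, g = ι a) ∨ (∃ a, g = ι a * b)) (p : G → Prop) :
    cnt p = cnt (fun a => p (ι a)) + cnt (fun a => p (ι a * b)) := by
  rw [cnt_split p (fun g => g ∈ Set.range ι)]
  have hb : ∀ a, ι a * b ∉ Set.range ι := by
    rintro a ⟨c, hc⟩
    exact hbnot ⟨a⁻¹ * c, by rw [map_mul, hc]; simp⟩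
  congr 1
  · symm
    refine Nat.card_congr (Equiv.ofBijective (fun x => ⟨ι x.1, x.2, x.1, rfl⟩) ⟨?_, ?_⟩)
    · intro x y h
      exact Subtype.ext (hinj (congrArg Subtype.val h))
    · rintro ⟨x, hx, y, rfl⟩
      exact ⟨⟨y, hx⟩, rfl⟩
  · symm
    refine Nat.card_congr (Equiv.ofBijective (fun x => ⟨ι x.1 * b, x.2, hb x.1⟩) ⟨?_, ?_⟩)
    · intro x y h
      exact Subtype.ext (hinj (mul_right_cancel (congrArg Subtype.val h)))
    · rintro ⟨x, hx, hy⟩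
      rcases hdecomp x with ⟨a, rfl⟩ | ⟨a, rfl⟩
      · exact absurd ⟨a, rfl⟩ hy
      · exact ⟨⟨a, hx⟩, rfl⟩

lemma arith_main (p n μ a c : ℕ) (hn1 : 1 < n) (hK : n * p = (p + 2) * μ)
    (hc : n * c = n * p * μ) (ha : n * p + (n - 1) * a = n * p * μ) 
    (hne : ¬ (p = 2 ∧ n = 2)) :
    c = p * μ ∧
    ((n * (p + 1) + a : ℕ) : ℚ) = (n : ℚ) * (((p + 2 : ℕ) : ℚ) - 1)
      + ((n * p : ℕ) : ℚ) * (((n * p : ℕ) : ℚ) - ((p + 2 : ℕ) : ℚ)) /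
        (((n : ℚ) - 1) * ((p + 2 : ℕ) : ℚ)) ∧
    ((n * p + c : ℕ) : ℚ) = (n : ℚ) * (((p + 2 : ℕ) : ℚ) - 2)
      + ((n * p : ℕ) : ℚ) ^ 2 / (((p + 2 : ℕ) : ℚ) * (n : ℚ)) ∧
    n * (p + 1) + a ≠ n * p + c := by
  obtain ⟨q, rfl⟩ : ∃ q, n = q + 2 := ⟨n - 2, by omega⟩
  have hc' : c = p * μ := Nat.eq_of_mul_eq_mul_left (by omega : 0 < q + 2) (by rw [hc]; ring)
  have ha' : (q + 2) * p + (q + 1) * a = (q + 2) * p * μ := ha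
  have hKq : ((q : ℚ) + 2) * p = (p + 2) * μ := by exact_mod_cast hK
  have haq : ((q : ℚ) + 2) * p + (q + 1) * a = (q + 2) * p * μ := by exact_mod_cast ha'
  refine ⟨hc', ?_, ?_, ?_⟩
  · push_cast
    have h1 : (q : ℚ) + 2 - 1 ≠ 0 := by
      have : (0 : ℚ) ≤ q := by positivity
      linarith
    have h2 : (p : ℚ) + 2 ≠ 0 := by positivity
    field_simp
    linear_combination (p + 2) * haq - ((q : ℚ) + 2) * p * hKq
  · subst hc'
    push_cast
    have h1 : (q : ℚ) + 2 ≠ 0 := by positivity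
    have h2 : (p : ℚ) + 2 ≠ 0 := by positivity
    field_simp
    linear_combination (-(p : ℚ)) * hKq
  · intro h
    subst hc'
    have h3 : q + 2 + a = p * μ := by nlinarith
    -- (q+1)(q+2) + (q+2) p μ - (q+2) p = (q+1) p μ
    have h4 : (q + 1) * (q + 2) + p * μ = (q + 2) * p := by nlinarith
    have h5 : (q + 1) * (p + 2) + p * p = p * (p + 2) := by
      have : (q + 2) * ((q + 1) * (p + 2) + p * p) = (q + 2) * (p * (p + 2)) := by
        calc (q + 2) * ((q + 1) * (p + 2) + p * p) 
            = (q + 1) * (q + 2) * (p + 2) + p * ((q + 2) * p) := by ring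
          _ = ((q + 1) * (q + 2) + p * μ) * (p + 2) := by rw [hK]; ring
          _ = _ := by rw [h4]; ring
      exact Nat.eq_of_mul_eq_mul_left (by omega) this
    have h6 : (q + 1) * (p + 2) = 2 * p := by nlinarith
    have hq : q = 0 := by
      by_contra hq
      have : 1 ≤ q := by omega
      nlinarith
    subst hq
    omega

lemma main_aux {A G : Type*} [CommGroup A] [Fintype A] [Group G] [Fintype G]
    (ι : A →* G) (hinj : Function.Injective ι)
    (b : G) (hb2 : b * b = 1)
    (hbconj : ∀ a : A, b * ι a * b⁻¹ = ι a⁻¹)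
    (hbnot : b ∉ Set.range ι)
    (hdecomp : ∀ g : G, (∃ a, g = ι a) ∨ (∃ a, g = ι a * b))
    (N : Subgroup A) (E : A → Prop) (S : Set G)
    (hS : S = ι '' ((Set.univ : Set A) \ (N : Set A)) ∪ (fun a => ι a * b) '' {a | E a})
    (p n μ a c : ℕ) (htop : N ≠ ⊤) (hn : cnt (fun x => x ∈ N) = n) (hn1 : 1 < n)
    (hcard : Fintype.card A = (p + 2) * n)
    (hE : ∀ g : A, cnt (fun x => E x ∧ x * g⁻¹ ∈ N) = μ)
    (hd : ∀ g : A, g ≠ 1 → cnt (fun x => E x ∧ E (g * x)) = if g ∈ N then a else c)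
    (hK : cnt E = n * p) (hne : ¬ (p = 2 ∧ n = 2)) :
    ∃ l1' l2' : ℕ,
        (l1' : ℚ) = (n : ℚ) * (((p + 2 : ℕ) : ℚ) - 1)
            + ((n * p : ℕ) : ℚ) * (((n * p : ℕ) : ℚ) - ((p + 2 : ℕ) : ℚ)) /
              (((n : ℚ) - 1) * ((p + 2 : ℕ) : ℚ)) ∧
        (l2' : ℚ) = (n : ℚ) * (((p + 2 : ℕ) : ℚ) - 2)
            + ((n * p : ℕ) : ℚ) ^ 2 / (((p + 2 : ℕ) : ℚ) * (n : ℚ)) ∧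
        S⁻¹ = S ∧
        (1 : G) ∉ S ∧
        (∀ g : G, cnt (fun x : G => x * g⁻¹ ∈ ι '' (N : Set A)) = n) ∧
        (∀ g : G, cnt (fun x : G => x * g⁻¹ ∈ S) = n * ((p + 2) - 1) + n * p) ∧
        (∀ g h : G, g ≠ h →
          cnt (fun x : G => x * g⁻¹ ∈ S ∧ x * h⁻¹ ∈ S)
            = if g * h⁻¹ ∈ ι '' (N : Set A) then l1' else l2') ∧
        l1' ≠ l2' := by
  have hbr : ∀ a, ι a * b ∉ Set.range ι := by
    rintro a ⟨c, hc⟩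
    exact hbnot ⟨a⁻¹ * c, by rw [map_mul, hc]; simp⟩
  have hbi : b⁻¹ = b := inv_eq_of_mul_eq_one_left hb2
  have hcomm : ∀ a : A, b * ι a = ι a⁻¹ * b := fun a => by
    rw [← hbconj a]; simp
  have hS1 : ∀ x, ι x ∈ S ↔ x ∉ N := by
    intro x
    rw [hS]
    constructor
    · rintro (⟨y, hy, h⟩ | ⟨y, hy, h⟩)
      · rw [← hinj h]; exact hy.2
      · exact absurd ⟨x, h.symm⟩ (hbr y)
    · intro h
      exact Or.inl ⟨x, ⟨trivial, h⟩, rfl⟩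
  have hS2 : ∀ x, ι x * b ∈ S ↔ E x := by
    intro x
    rw [hS]
    constructor
    · rintro (⟨y, hy, h⟩ | ⟨y, hy, h⟩)
      · exact absurd ⟨y, h⟩ (hbr x)
      · rw [← hinj (mul_right_cancel h)]; exact hy
    · intro h
      exact Or.inr ⟨x, h, rfl⟩
  have hN1 : ∀ x, ι x ∈ ι '' (N : Set A) ↔ x ∈ N := fun x => by
    constructor
    · rintro ⟨y, hy, h⟩
      rw [← hinj h]; exact hy
    · exact fun h => ⟨x, h, rfl⟩
  have hN2 : ∀ x, ι x * b ∉ ι '' (N : Set A) := by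
    rintro x ⟨y, hy, h⟩
    exact hbr x ⟨y, h⟩
  have hshift : ∀ (q : G → Prop) (g : G), cnt (fun x => q (x * g⁻¹)) = cnt q := fun q g =>
    cnt_equiv (Equiv.mulRight g⁻¹) fun a => by simp
  have hG := fun q => cnt_G ι hinj b hbnot hdecomp q
  have hKμ := count_K N E μ hE
  obtain ⟨hc, ha⟩ := core N E μ a c htop hE hd
  rw [hn] at hKμ hc ha
  rw [hK] at hKμ hc ha
  rw [hcard] at hKμ
  have hKμ' : n * p = (p + 2) * μ :=
    Nat.eq_of_mul_eq_mul_right (by omega : 0 < n) (by rw [hKμ]; ring)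
  obtain ⟨hcμ, e1, e2, e3⟩ := arith_main p n μ a c hn1 hKμ' hc ha hne
  refine ⟨_, _, e1, e2, ?_, ?_, ?_, ?_, ?_, e3⟩
  · ext g
    rw [Set.mem_inv]
    rcases hdecomp g with ⟨x, rfl⟩ | ⟨x, rfl⟩
    · rw [← map_inv, hS1, hS1, inv_mem_iff]
    · have : (ι x * b)⁻¹ = ι x * b := by
        rw [mul_inv_rev, hbi, ← map_inv, hcomm, inv_inv]
      rw [this]
  · rw [← map_one ι, hS1]
    exact fun h => h N.one_mem
  · intro g
    rw [hshift (fun x => x ∈ ι '' (N : Set A)), hG]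
    simp only [hN1, hN2, hn]
    simp [cnt]
  · intro g
    rw [hshift (fun x => x ∈ S), hG]
    simp only [hS1, hS2, hK]
    have := cnt_compl (fun x => x ∈ N)
    rw [hn, hcard] at this
    have h2 : n * (p + 2 - 1) = (p + 1) * n := by rw [mul_comm]; rfl
    rw [h2]
    linarith
  · intro g h hgh
    obtain ⟨t, ht⟩ : ∃ t, t = g * h⁻¹ := ⟨_, rfl⟩
    have ht1 : t ≠ 1 := by
      rw [ht]; exact fun h' => hgh (mul_inv_eq_one.1 h')
    have : cnt (fun x : G => x * g⁻¹ ∈ S ∧ x * h⁻¹ ∈ S) = cnt (fun x => x ∈ S ∧ x * t ∈ S) := by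
      rw [← hshift (fun x => x ∈ S ∧ x * t ∈ S) g]
      exact cnt_iff fun x => by simp [ht, mul_assoc]
    rw [this, ← ht, hG]
    rcases hdecomp t with ⟨s, rfl⟩ | ⟨s, rfl⟩
    · have r1 : ∀ x, ι x * ι s ∈ S ↔ x * s ∉ N := fun x => by rw [← map_mul, hS1]
      have r2 : ∀ x, ι x * b * ι s ∈ S ↔ E (s⁻¹ * x) := fun x => by
        rw [mul_assoc, hcomm, ← mul_assoc, ← map_mul, hS2, mul_comm]
      have hs1 : s⁻¹ ≠ 1 := by
        rintro h'
        rw [inv_eq_one] at h'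
        exact ht1 (by rw [h', map_one])
      simp only [r1, r2, hS1, hS2, hN1]
      rw [hd _ hs1, inv_mem_iff]
      split_ifs with hs
      · have := cnt_NN_in N s hs
        rw [hn, hcard] at this
        linarith
      · have := cnt_NN_out N s hs
        rw [hn, hcard] at this
        linarith
    · have r1 : ∀ x, ι x * (ι s * b) ∈ S ↔ E (x * s) := fun x => by
        rw [← mul_assoc, ← map_mul, hS2]
      have r2 : ∀ x, ι x * b * (ι s * b) ∈ S ↔ x * s⁻¹ ∉ N := fun x => by
        rw [mul_assoc, ← mul_assoc b, hcomm, mul_assoc, hb2, mul_one, ← map_mul, hS1]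
      simp only [r1, r2, hS1, hS2, hN2, if_false]
      obtain ⟨h1, h2⟩ := cnt_NE N E μ hE s
      rw [hK] at h1 h2
      rw [hcμ]
      nlinarith

/-- for a divisible difference set `D` relative to `N ≤ A` with
`m, n > 1`, `k ≤ mn − k`, satisfying the intersection condition, with `k_{7−i} = 2n`
for a fixed `i ∈ {3,4}` and `(m,n,k) ≠ (4,2,4)`, the Cayley graph `Cay(G, X2 ∪ Xᵢ)`
over `G = Dih(A)` is a proper divisible design graph with parameters `v' = 2mn`,
`k' = n(m−1) + kᵢ`, `λ1' = n(m−1) + kᵢ(kᵢ−m)/((n−1)m)`, `λ2' = n(m−2) + kᵢ²/(mn)`,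
`m' = 2m`, `n' = n`, with canonical partition into the right cosets of `N` in `G`. -/
theorem dihedral_ddg_eq2
    (A : Type*) [CommGroup A] [Fintype A] [DecidableEq A]
    (G : Type*) [Group G] [Fintype G]
    (ι : A →* G) (hinj : Function.Injective ι)
    (b : G) (hb2 : b * b = 1) (hb1 : b ≠ 1)
    (hbconj : ∀ a : A, b * ι a * b⁻¹ = ι a⁻¹)
    (hbnot : b ∉ Set.range ι)
    (hcardG : Fintype.card G = 2 * Fintype.card A)
    (hdecomp : ∀ g : G, (∃ a, g = ι a) ∨ (∃ a, g = ι a * b))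
    (N : Subgroup A) (hNtop : N ≠ ⊤) (hNbot : N ≠ ⊥)
    (D : Set A) (hDne : D.Nonempty)
    (m n k l1 l2 : ℕ) (hm : N.index = m) (hn : Nat.card N = n)
    (hk : Nat.card D = k) (hm1 : 1 < m) (hn1 : 1 < n)
    (hdds : ∀ g : A, g ≠ 1 →
      Nat.card {pr : A × A // pr.1 ∈ D ∧ pr.2 ∈ D ∧ pr.1 * pr.2⁻¹ = g}
        = if g ∈ N then l1 else l2)
    (hic : ∃ μ : ℕ, ∀ g : A, Nat.card {x : A // x ∈ D ∧ x * g⁻¹ ∈ N} = μ)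
    (hkle : k ≤ m * n - k) (hkmn : k ≤ m * n)
    (hne : ¬(m = 4 ∧ n = 2 ∧ k = 4))
    (X2 : Set G) (hX2 : X2 = ι '' ((Set.univ : Set A) \ (N : Set A))) :
    ∀ (Xi : Set G) (ki kj : ℕ),
      ((Xi = (fun a => ι a * b) '' D ∧ ki = k ∧ kj = m * n - k) ∨
        (Xi = (fun a => ι a * b) '' ((Set.univ : Set A) \ D) ∧
          ki = m * n - k ∧ kj = k)) →
      kj = 2 * n →
      ∃ l1' l2' : ℕ,
        (l1' : ℚ) = (n : ℚ) * ((m : ℚ) - 1)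
            + (ki : ℚ) * ((ki : ℚ) - (m : ℚ)) / (((n : ℚ) - 1) * (m : ℚ)) ∧
        (l2' : ℚ) = (n : ℚ) * ((m : ℚ) - 2) + (ki : ℚ) ^ 2 / ((m : ℚ) * (n : ℚ)) ∧
        (X2 ∪ Xi)⁻¹ = X2 ∪ Xi ∧
        (1 : G) ∉ X2 ∪ Xi ∧
        Fintype.card G = 2 * (m * n) ∧
        (∀ g : G, Nat.card {x : G // x * g⁻¹ ∈ ι '' (N : Set A)} = n) ∧
        (∀ g : G, Nat.card {x : G // x * g⁻¹ ∈ X2 ∪ Xi} = n * (m - 1) + ki) ∧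
        (∀ g h : G, g ≠ h →
          Nat.card {x : G // x * g⁻¹ ∈ X2 ∪ Xi ∧ x * h⁻¹ ∈ X2 ∪ Xi}
            = if g * h⁻¹ ∈ ι '' (N : Set A) then l1' else l2') ∧
        l1' ≠ l2' ∧ 1 < 2 * m ∧ 1 < n := by
  intro Xi ki kj hX hkj
  have hcardA : Fintype.card A = m * n := by
    rw [← hm, ← hn, ← Nat.card_eq_fintype_card, mul_comm]
    exact (Subgroup.card_mul_index N).symm
  obtain ⟨μ, hμ⟩ := hic
  have hn' : cnt (fun x => x ∈ N) = n := hn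
  have hk' : cnt (fun x => x ∈ D) = k := hk
  have hD : ∀ g : A, g ≠ 1 → cnt (fun x => x ∈ D ∧ g * x ∈ D) = if g ∈ N then l1 else l2 := by
    intro g hg
    rw [← hdds g hg]
    refine Nat.card_congr ⟨fun x => ⟨(g * x.1, x.1), x.2.2, x.2.1, by simp⟩,
      fun y => ⟨y.1.2, y.2.2.1, by
        have h : g * y.1.2 = y.1.1 := (eq_mul_inv_iff_mul_eq.1 y.2.2.2.symm)
        rw [h]; exact y.2.1⟩, fun x => rfl, fun y => ?_⟩
    apply Subtype.ext
    refine Prod.ext ?_ rfl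
    exact eq_mul_inv_iff_mul_eq.1 y.2.2.2.symm
  have hμ' : ∀ g : A, cnt (fun x => x ∈ D ∧ x * g⁻¹ ∈ N) = μ := hμ
  obtain ⟨p, rfl⟩ : ∃ p, m = p + 2 := ⟨m - 2, by omega⟩
  have hexp : (p + 2) * n = n * p + 2 * n := by ring
  have hki : ki = n * p := by
    rcases hX with ⟨-, h1, h2⟩ | ⟨-, h1, h2⟩ <;> omega
  have hne' : ¬ (p = 2 ∧ n = 2) := by
    rintro ⟨rfl, rfl⟩
    apply hne
    refine ⟨rfl, rfl, ?_⟩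
    rcases hX with ⟨-, h1, h2⟩ | ⟨-, h1, h2⟩ <;> omega
  have key : ∃ (E : A → Prop) (μ' a c : ℕ), Xi = (fun a => ι a * b) '' {a | E a} ∧
      (∀ g : A, cnt (fun x => E x ∧ x * g⁻¹ ∈ N) = μ') ∧
      (∀ g : A, g ≠ 1 → cnt (fun x => E x ∧ E (g * x)) = if g ∈ N then a else c) ∧
      cnt E = ki := by
    rcases hX with ⟨h0, h1, h2⟩ | ⟨h0, h1, h2⟩
    · exact ⟨fun x => x ∈ D, μ, l1, l2, h0, hμ', hD, by rw [hk', h1]⟩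
    · refine ⟨fun x => ¬ x ∈ D, n - μ, (p + 2) * n + l1 - 2 * k, (p + 2) * n + l2 - 2 * k,
        ?_, ?_, ?_, ?_⟩
      · rw [h0]
        congr 1
        ext x
        simp
      · intro g
        rw [compl_ic N (fun x => x ∈ D) μ hμ' g, hn']
      · intro g hg
        rw [compl_dd (fun x => x ∈ D) g, hD g hg, hcardA, hk']
        split_ifs <;> rfl
      · have := cnt_compl (fun x => x ∈ D)
        rw [hk', hcardA] at this
        omega
  obtain ⟨E, μ', a, c, hXi, hE, hd, hK⟩ := key
  subst hki
  obtain ⟨l1', l2', r1, r2, r3, r4, r5, r6, r7, r8⟩ :=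
    main_aux ι hinj b hb2 hbconj hbnot hdecomp N E (X2 ∪ Xi) (by rw [hX2, hXi])
      p n μ' a c hNtop hn' hn1 hcardA hE hd hK hne'
  exact ⟨l1', l2', r1, r2, r3, r4, by rw [hcardG, hcardA], r5, r6, r7, r8, by omega, hn1⟩
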